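/- arXiv:1711.09768 — 2 statements merged into one kernel-verified Lean document; each statement's English description precedes it below -/
import Mathlib

section
/- Fix p > 0, a > 0, p_I > 0, c_I ∈ (0,1], R̄ > 0 and β = 1 − p/(2^{2·R̄} − 1). Let q : ℝ → ℝ be differentiable at 0, satisfy the tightness identity on an open interval containing 0, with q(0) > 0 and a·q(0) + p_I + β > 0. Then the function f(x) = R_S(q(x), x) has strictly positive derivative at x = 0; in particular, improper signaling (c_S > 0) strictly improves the secondary rate regardless of the value of the interference channel gain a, whenever the primary receiver is corrupted by improper noise (p_I·c_I > 0). -/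
/-- Secondary-user rate after zero-forcing. -/
noncomputable def RS (pS cS : ℝ) : ℝ :=
  (1/2) * Real.logb 2 (1 + pS * (pS * (1 - cS^2) + 2))

/-- Tightness identity characterizing `q x`, the maximum secondary transmit power
at circularity coefficient `x` such that the primary rate constraint is tight. -/
def Tight (p a pI cI β : ℝ) (q : ℝ → ℝ) (x : ℝ) : Prop :=
  a^2 * (q x)^2 * (1 - x^2) =
    (1 - β) * (p + 2*(1 + a * q x + pI)) - 1 - 2*(a * q x + pI)
      - pI^2 * (1 - cI^2) - 2 * a * q x * pI * (1 - x * cI)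

/-!
Along the tight constraint a quadratic polynomial in `q x`, with coefficients depending on `x`, is
constant. Differentiating it implicitly at `0` gives `q' 0 * (a * q 0 + pI + β) = q 0 * (pI * cI)`:
the noise impropriety enters the constraint to first order in `x`. In the rate, on the other hand,
`x` appears explicitly only through `x ^ 2`, so using an improper signal costs nothing to first
order and the rate inherits the growth of `q`.
-/

open Filter Topology

section

variable {p a pI cI β : ℝ} {q : ℝ → ℝ}

lemma tight_iff_quadratic_eq {x : ℝ} :
    Tight p a pI cI β q x ↔
      (a * q x) ^ 2 * (1 - x ^ 2) + 2 * (a * q x) * (pI * (1 - x * cI) + β) =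
        (1 - β) * (p + 2 * (1 + pI)) - 1 - 2 * pI - pI ^ 2 * (1 - cI ^ 2) := by
  unfold Tight
  constructor <;> intro h <;> linear_combination h

lemma hasDerivAt_tight_quadratic {q' c : ℝ} (hq : HasDerivAt q q' c) :
    HasDerivAt
      (fun x ↦ (a * q x) ^ 2 * (1 - x ^ 2) + 2 * (a * q x) * (pI * (1 - x * cI) + β))
      (2 * a * (q' * (a * q c * (1 - c ^ 2) + pI * (1 - c * cI) + β)
        - q c * (pI * cI + a * c * q c))) c := by
  have hx := hasDerivAt_id' c
  have haq := hq.const_mul a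
  have hquad := (haq.fun_pow 2).fun_mul ((hx.fun_pow 2).const_sub 1)
  have hlin := (haq.const_mul 2).fun_mul
    ((((hx.mul_const cI).const_sub 1).const_mul pI).add_const β)
  refine (hquad.fun_add hlin).congr_deriv ?_
  push_cast
  ring

lemma deriv_mul_eq_of_eventually_tight {c : ℝ} (ha : a ≠ 0) (hq : DifferentiableAt ℝ q c)
    (htight : ∀ᶠ x in 𝓝 c, Tight p a pI cI β q x) :
    deriv q c * (a * q c * (1 - c ^ 2) + pI * (1 - c * cI) + β) =
      q c * (pI * cI + a * c * q c) := by
  have hconst := (hasDerivAt_const c _).congr_of_eventuallyEq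
    (htight.mono fun _ hx ↦ tight_iff_quadratic_eq.mp hx)
  have hzero := (hasDerivAt_tight_quadratic hq.hasDerivAt).unique hconst
  exact sub_eq_zero.mp ((mul_eq_zero.mp hzero).resolve_left (mul_ne_zero two_ne_zero ha))

lemma hasDerivAt_RS {q' c : ℝ} (hq : HasDerivAt q q' c)
    (hne : 1 + q c * (q c * (1 - c ^ 2) + 2) ≠ 0) :
    HasDerivAt (fun x ↦ RS (q x) x)
      ((q' * (q c * (1 - c ^ 2) + 1) - c * q c ^ 2) /
        ((1 + q c * (q c * (1 - c ^ 2) + 2)) * Real.log 2)) c := by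
  have hx := hasDerivAt_id' c
  have harg :=
    (hq.fun_mul ((hq.fun_mul ((hx.fun_pow 2).const_sub 1)).add_const 2)).const_add 1
  refine (((harg.log hne).div_const (Real.log 2)).const_mul (1 / 2)).congr_deriv ?_
  rw [div_div, ← mul_div_assoc]
  congr 1
  push_cast
  ring

theorem stmt5_general (ha : a ≠ 0) (hdiff : DifferentiableAt ℝ q 0)
    (htight : ∀ᶠ x in 𝓝 0, Tight p a pI cI β q x)
    (hq : 1 + q 0 ≠ 0) (hden : a * q 0 + pI + β ≠ 0) :
    HasDerivAt (fun x ↦ RS (q x) x)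
      (q 0 * (pI * cI) / ((a * q 0 + pI + β) * (1 + q 0) * Real.log 2)) 0 := by
  have hslope : deriv q 0 * (a * q 0 + pI + β) = q 0 * (pI * cI) := by
    simpa using deriv_mul_eq_of_eventually_tight ha hdiff htight
  have hsquare : 1 + q 0 * (q 0 * (1 - 0 ^ 2) + 2) = (1 + q 0) ^ 2 := by ring
  have hrate := hasDerivAt_RS hdiff.hasDerivAt (hsquare ▸ pow_ne_zero 2 hq)
  refine hrate.congr_deriv ?_
  rw [hsquare, eq_div_of_mul_eq hden hslope]
  field_simp
  ring

end

/-- when the primary receiver is corrupted by improper noise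
(`p_I·c_I > 0`), the secondary rate along the tight constraint has strictly
positive derivative at `c_S = 0`, i.e. improper signaling strictly helps
regardless of the interference gain `a`. -/
theorem stmt5 (p a pI cI Rbar β : ℝ) (q : ℝ → ℝ)
    (hp : 0 < p) (ha : 0 < a) (hpI : 0 < pI) (hcI : cI ∈ Set.Ioc (0:ℝ) 1)
    (hR : 0 < Rbar) (hβ : β = 1 - p / ((2:ℝ) ^ (2 * Rbar) - 1))
    (hdiff : DifferentiableAt ℝ q 0)
    (htight : ∃ ε > (0:ℝ), ∀ x ∈ Set.Ioo (-ε) ε, Tight p a pI cI β q x)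
    (hq : 0 < q 0)
    (hden : 0 < a * q 0 + pI + β) :
    0 < deriv (fun x => RS (q x) x) 0 := by
  obtain ⟨ε, hε, htight⟩ := htight
  have hnear := eventually_of_mem (Ioo_mem_nhds (neg_lt_zero.mpr hε) hε) htight
  have hcI_pos := hcI.1
  rw [(stmt5_general ha.ne' hdiff hnear (by positivity) hden.ne').deriv]
  positivity
end

section
/- Fix p > 0, a > 0, R̄ > 0 and β = 1 − p/(2^{2·R̄} − 1), and set p_I = 0 (proper noise at the primary receiver). Let q : ℝ → ℝ be differentiable at c ∈ (0,1], satisfy the tightness identity (with p_I = 0) on an open interval containing c, with q(c) > 0 and a·q(c)·(1 − c²) + β > 0. Then the function f(x) = R_S(q(x), x) has nonnegative derivative at c if and only if a ≥ β. -/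
/-- Tightness identity with proper noise at the primary receiver (`p_I = 0`):
`a²·q(x)²·(1 − x²) = (1 − β)·(p + 2·(1 + a·q(x))) − 1 − 2·a·q(x)`. -/
def TightProper (p a β : ℝ) (q : ℝ → ℝ) (x : ℝ) : Prop :=
  a^2 * (q x)^2 * (1 - x^2) =
    (1 - β) * (p + 2*(1 + a * q x)) - 1 - 2 * (a * q x)

/-!
On the tight constraint the argument `1 + 2 q + q² (1 - x²)` of the logarithm in the secondary rate
is an affine function of `q` alone, with slope `2 (1 - β / a)`, because the constraint expresses
`q² (1 - x²)` affinely in `q`. Implicit differentiation of the constraint shows that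
`q'(c) > 0`. Hence the derivative of the rate has the sign of `1 - β / a`.
-/

open Filter Topology

theorem RS_arg_pos {pS cS : ℝ} (hpS : 0 ≤ pS) (hcS : cS ^ 2 ≤ 1) :
    0 < 1 + pS * (pS * (1 - cS ^ 2) + 2) := by
  have : 0 ≤ 1 - cS ^ 2 := sub_nonneg.mpr hcS
  positivity

theorem hasDerivAt_sq_mul_one_sub_sq {q : ℝ → ℝ} {q' c : ℝ} (hq : HasDerivAt q q' c) :
    HasDerivAt (fun x => q x ^ 2 * (1 - x ^ 2))
      (2 * q c * (q' * (1 - c ^ 2) - c * q c)) c := by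
  have hcompl : HasDerivAt (fun x : ℝ => 1 - x ^ 2) (-(2 * c)) c := by
    simpa using (hasDerivAt_pow 2 c).const_sub 1
  refine ((hq.fun_pow 2).mul hcompl).congr_deriv ?_
  push_cast
  ring

namespace TightProper

variable {p a β c q' : ℝ} {q : ℝ → ℝ}

theorem sq_mul_one_sub_sq_eq {x : ℝ} (ha : a ≠ 0) (h : TightProper p a β q x) :
    q x ^ 2 * (1 - x ^ 2) = -(2 * β / a) * q x + ((1 - β) * (p + 2) - 1) / a ^ 2 := by
  unfold TightProper at h
  field_simp
  linear_combination h

protected theorem hasDerivAt_sq_mul_one_sub_sq (ha : a ≠ 0)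
    (htight : ∀ᶠ x in 𝓝 c, TightProper p a β q x) (hq : HasDerivAt q q' c) :
    HasDerivAt (fun x => q x ^ 2 * (1 - x ^ 2)) (-(2 * β / a) * q') c :=
  ((hq.const_mul _).add_const _).congr_of_eventuallyEq
    (htight.mono fun _ h => h.sq_mul_one_sub_sq_eq ha)

theorem deriv_mul_eq (ha : a ≠ 0) (htight : ∀ᶠ x in 𝓝 c, TightProper p a β q x)
    (hq : HasDerivAt q q' c) :
    q' * (a * q c * (1 - c ^ 2) + β) = a * c * q c ^ 2 := by
  have himplicit : 2 * q c * (q' * (1 - c ^ 2) - c * q c) = -(2 * β / a) * q' :=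
    (hasDerivAt_sq_mul_one_sub_sq hq).unique
      (TightProper.hasDerivAt_sq_mul_one_sub_sq ha htight hq)
  field_simp at himplicit
  linear_combination himplicit

theorem deriv_pos (ha : 0 < a) (hc : 0 < c) (htight : ∀ᶠ x in 𝓝 c, TightProper p a β q x)
    (hq : HasDerivAt q q' c) (hqc : q c ≠ 0) (hden : 0 < a * q c * (1 - c ^ 2) + β) :
    0 < q' := by
  refine pos_of_mul_pos_left ?_ hden.le
  rw [deriv_mul_eq ha.ne' htight hq]
  positivity

theorem hasDerivAt_RS_arg (ha : a ≠ 0) (htight : ∀ᶠ x in 𝓝 c, TightProper p a β q x)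
    (hq : HasDerivAt q q' c) :
    HasDerivAt (fun x => 1 + q x * (q x * (1 - x ^ 2) + 2)) (2 * (1 - β / a) * q') c := by
  have hsum : HasDerivAt (fun x => 1 + (q x ^ 2 * (1 - x ^ 2) + 2 * q x))
      (-(2 * β / a) * q' + 2 * q') c :=
    ((TightProper.hasDerivAt_sq_mul_one_sub_sq ha htight hq).fun_add (hq.const_mul 2)).const_add 1
  refine (hsum.congr_deriv (by ring)).congr_of_eventuallyEq (.of_eq ?_)
  funext x
  ring

theorem hasDerivAt_RS (ha : a ≠ 0) (htight : ∀ᶠ x in 𝓝 c, TightProper p a β q x)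
    (hq : HasDerivAt q q' c) (harg : 1 + q c * (q c * (1 - c ^ 2) + 2) ≠ 0) :
    HasDerivAt (fun x => RS (q x) x)
      ((1 - β / a) * (q' / (1 + q c * (q c * (1 - c ^ 2) + 2)) / Real.log 2)) c :=
  ((((hasDerivAt_RS_arg ha htight hq).log harg).div_const (Real.log 2)).const_mul
    (1 / 2)).congr_deriv (by ring)

end TightProper

/-- with proper noise at the primary receiver, the secondary rate
along the tight constraint is non-decreasing at `c ∈ (0,1]` iff `a ≥ β`. -/
theorem stmt10 (p a Rbar β c : ℝ) (q : ℝ → ℝ)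
    (hp : 0 < p) (ha : 0 < a)
    (hR : 0 < Rbar) (hβ : β = 1 - p / ((2:ℝ) ^ (2 * Rbar) - 1))
    (hc : c ∈ Set.Ioc (0:ℝ) 1)
    (hdiff : DifferentiableAt ℝ q c)
    (htight : ∃ ε > (0:ℝ), ∀ x ∈ Set.Ioo (c - ε) (c + ε), TightProper p a β q x)
    (hq : 0 < q c)
    (hden : 0 < a * q c * (1 - c^2) + β) :
    0 ≤ deriv (fun x => RS (q x) x) c ↔ a ≥ β := by
  obtain ⟨hc0, hc1⟩ := hc
  obtain ⟨ε, hε, htightOn⟩ := htight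
  have hnhds : ∀ᶠ x in 𝓝 c, TightProper p a β q x :=
    eventually_of_mem (Ioo_mem_nhds (sub_lt_self c hε) (lt_add_of_pos_right c hε)) htightOn
  have harg := RS_arg_pos hq.le (pow_le_one₀ (n := 2) hc0.le hc1)
  have hderiv_pos := TightProper.deriv_pos ha hc0 hnhds hdiff.hasDerivAt hq.ne' hden
  have hlog : 0 < Real.log 2 := Real.log_pos one_lt_two
  rw [(TightProper.hasDerivAt_RS ha.ne' hnhds hdiff.hasDerivAt harg.ne').deriv,
    mul_nonneg_iff_of_pos_right (div_pos (div_pos hderiv_pos harg) hlog), sub_nonneg, div_le_one ha]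
end
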